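/- Let G be a connected graph on n ≥ 11 vertices with independence number n − 4, and suppose G contains a cycle. Then there exists a connected graph on n vertices with independence number n − 4 and strictly smaller A_α spectral radius for every α ∈ [0,1); consequently any minimizer of λ_α over graphs of order n ≥ 11 with independence number n−4 is a tree. -/

import Mathlib

open scoped Classical

/-- The matrix `A_α(G) = α·D(G) + (1−α)·A(G)` over `ℝ`. -/
noncomputable def Aalpha {V : Type*} [Fintype V] (G : SimpleGraph V) (α : ℝ) : Matrix V V ℝ :=
  α • Matrix.diagonal (fun v => (G.degree v : ℝ)) +
    (1 - α) • (Matrix.of fun i j => if G.Adj i j then (1 : ℝ) else 0)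

/-- `lam` is the largest real eigenvalue (spectral radius) of the real symmetric matrix `M`. -/
def IsSpectralRadius {V : Type*} [Fintype V] (M : Matrix V V ℝ) (lam : ℝ) : Prop :=
  (∃ x : V → ℝ, x ≠ 0 ∧ M.mulVec x = lam • x) ∧
    ∀ μ : ℝ, (∃ x : V → ℝ, x ≠ 0 ∧ M.mulVec x = μ • x) → μ ≤ lam

/-- The independence number of `G`: the maximum cardinality of an independent set. -/
noncomputable def indepNum {V : Type*} [Fintype V] (G : SimpleGraph V) : ℕ :=
  sSup {k : ℕ | ∃ s : Finset V, s.card = k ∧ ∀ a ∈ s, ∀ b ∈ s, ¬ G.Adj a b}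

/-!
Suppose first that some matching saturates the complement `C` of a maximum independent set. The
matching survives the deletion of an unmatched edge and certifies that the independence number is
unchanged. Some cycle edge is unmatched, so it can be deleted without disconnecting `G`, and by
Perron–Frobenius this strictly lowers the spectral radius.

If there is no such matching, Hall's theorem yields `X ⊆ C` with fewer than `#X` neighbours outside
`C`. As `G` is connected, the few vertices of `C \ X` must then have large degrees, so that
`Δ ≥ (n - 3) / 2`. The star around a vertex of maximum degree bounds the spectral radius of `G` from
below; a double broom of diameter `8` whose leaves are split evenly has independence number `n - 4`
and only hubs of degree less than `Δ`, and a Collatz–Wielandt test vector shows that its spectral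
radius stays below that bound.
-/

open scoped Finset Matrix

section Spectral

variable {V W : Type*} [Fintype V] [Fintype W] {M : Matrix V V ℝ} {lam μ : ℝ} {x y : V → ℝ}

lemma IsSpectralRadius.posSemidef_smul_one_sub (h : IsSpectralRadius M lam) (hM : M.IsSymm) :
    (lam • 1 - M).PosSemidef := by
  have hH : (lam • 1 - M).IsHermitian := by
    simp [Matrix.IsHermitian, Matrix.conjTranspose_eq_transpose_of_trivial, hM.eq]
  refine hH.posSemidef_iff_eigenvalues_nonneg.2 fun j => ?_
  have hne : (hH.eigenvectorBasis j).ofLp ≠ 0 := by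
    simpa using hH.eigenvectorBasis.orthonormal.ne_zero j
  have heig := hH.mulVec_eigenvectorBasis j
  rw [Matrix.sub_mulVec, Matrix.smul_mulVec, Matrix.one_mulVec] at heig
  exact sub_le_self_iff _ |>.1 <| h.2 (lam - hH.eigenvalues j) ⟨_, hne, by
    rw [sub_smul, ← heig, sub_sub_cancel]⟩

lemma dotProduct_smul_one_sub_mulVec :
    x ⬝ᵥ (lam • 1 - M) *ᵥ x = lam * (x ⬝ᵥ x) - x ⬝ᵥ M *ᵥ x := by
  rw [Matrix.sub_mulVec, Matrix.smul_mulVec, Matrix.one_mulVec, dotProduct_sub, dotProduct_smul,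
    smul_eq_mul]

lemma IsSpectralRadius.dotProduct_mulVec_le (h : IsSpectralRadius M lam) (hM : M.IsSymm)
    (x : V → ℝ) : x ⬝ᵥ M *ᵥ x ≤ lam * (x ⬝ᵥ x) := by
  have hnonneg := (h.posSemidef_smul_one_sub hM).dotProduct_mulVec_nonneg x
  rwa [star_trivial, dotProduct_smul_one_sub_mulVec, sub_nonneg] at hnonneg

lemma IsSpectralRadius.mulVec_eq_smul (h : IsSpectralRadius M lam) (hM : M.IsSymm)
    (hx : lam * (x ⬝ᵥ x) ≤ x ⬝ᵥ M *ᵥ x) : M *ᵥ x = lam • x := by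
  have hzero : star x ⬝ᵥ (lam • 1 - M) *ᵥ x = 0 := by
    rw [star_trivial, dotProduct_smul_one_sub_mulVec]
    linarith [h.dotProduct_mulVec_le hM x]
  have hker := ((h.posSemidef_smul_one_sub hM).dotProduct_mulVec_zero_iff x).1 hzero
  rwa [Matrix.sub_mulVec, Matrix.smul_mulVec, Matrix.one_mulVec, sub_eq_zero, eq_comm] at hker

-- Passing from an eigenvector to its absolute value cannot decrease the Rayleigh quotient.
lemma IsSpectralRadius.exists_nonneg_eigenvector (h : IsSpectralRadius M lam) (hM : M.IsSymm)
    (hnonneg : ∀ i j, i ≠ j → 0 ≤ M i j) :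
    ∃ x : V → ℝ, 0 ≤ x ∧ x ≠ 0 ∧ M *ᵥ x = lam • x := by
  obtain ⟨y, hy0, hy⟩ := h.1
  refine ⟨|y|, abs_nonneg y, by simpa using hy0, h.mulVec_eq_smul hM ?_⟩
  calc lam * (|y| ⬝ᵥ |y|) = lam * (y ⬝ᵥ y) := by simp [dotProduct]
    _ = y ⬝ᵥ M *ᵥ y := by rw [hy, dotProduct_smul, smul_eq_mul]
    _ ≤ |y| ⬝ᵥ M *ᵥ |y| := by
      simp only [dotProduct, Matrix.mulVec, Finset.mul_sum, Pi.abs_apply]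
      refine Finset.sum_le_sum fun i _ => Finset.sum_le_sum fun j _ => ?_
      obtain rfl | hij := eq_or_ne i j
      · rw [mul_left_comm, mul_left_comm |y i|, abs_mul_abs_self]
      · rw [mul_left_comm, mul_left_comm |y i|, ← abs_mul]
        exact mul_le_mul_of_nonneg_left (le_abs_self _) (hnonneg i j hij)

lemma pos_of_mulVec_eq_smul {G : SimpleGraph V} (hG : G.Connected)
    (hnonneg : ∀ i j, i ≠ j → 0 ≤ M i j) (hpos : ∀ i j, G.Adj i j → 0 < M i j)
    (hx : 0 ≤ x) (hx0 : x ≠ 0) (heig : M *ᵥ x = lam • x) (v : V) : 0 < x v := by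
  have zero_of_adj : ∀ v w, G.Adj v w → x v = 0 → x w = 0 := by
    intro v w hvw hv
    have hsum : ∑ u, M v u * x u = 0 := by
      simpa [hv, Matrix.mulVec, dotProduct] using congrFun heig v
    have hterm : ∀ u ∈ Finset.univ, 0 ≤ M v u * x u := by
      intro u _
      obtain rfl | hvu := eq_or_ne v u
      · simp [hv]
      · exact mul_nonneg (hnonneg v u hvu) (hx u)
    exact (mul_eq_zero.1 ((Finset.sum_eq_zero_iff_of_nonneg hterm).1 hsum w
      (Finset.mem_univ w))).resolve_left (hpos v w hvw).ne'
  refine (hx v).lt_of_ne' fun hv => hx0 (funext fun w => ?_)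
  obtain ⟨p⟩ := hG.preconnected v w
  induction p with
  | nil => exact hv
  | cons hadj _ ih => exact ih (zero_of_adj _ _ hadj hv)

-- The Collatz–Wielandt bound: pair `M x < μ x` with the left Perron vector `y`.
lemma lt_of_mulVec_lt_smul (hM : M.IsSymm) (hy : ∀ v, 0 < y v) (heig : M *ᵥ y = lam • y)
    (hx : 0 ≤ x) (hlt : M *ᵥ x < μ • x) : lam < μ := by
  have hlam : y ⬝ᵥ M *ᵥ x = lam * (y ⬝ᵥ x) := by
    rw [Matrix.dotProduct_mulVec, ← Matrix.mulVec_transpose, hM.eq, heig, smul_dotProduct,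
      smul_eq_mul]
  have hpair : y ⬝ᵥ M *ᵥ x < μ * (y ⬝ᵥ x) := by
    obtain ⟨hle, v, hv⟩ := Pi.lt_def.1 hlt
    rw [← smul_eq_mul μ, ← dotProduct_smul]
    exact Finset.sum_lt_sum (fun w _ => mul_le_mul_of_nonneg_left (hle w) (hy w).le)
      ⟨v, Finset.mem_univ v, mul_lt_mul_of_pos_left hv (hy v)⟩
  have hyx : 0 ≤ y ⬝ᵥ x := dotProduct_nonneg_of_nonneg (fun v => (hy v).le) hx
  exact lt_of_mul_lt_mul_right (hlam ▸ hpair) hyx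

lemma isSpectralRadius_submatrix (e : W ≃ V) :
    IsSpectralRadius (M.submatrix e e) lam ↔ IsSpectralRadius M lam := by
  have hiff (μ : ℝ) : (∃ x, x ≠ 0 ∧ M.submatrix e e *ᵥ x = μ • x) ↔
      ∃ x, x ≠ 0 ∧ M *ᵥ x = μ • x :=
    (e.arrowCongr (Equiv.refl ℝ)).exists_congr fun x => by
      rw [Matrix.submatrix_mulVec_equiv, ← e.eq_comp_symm]
      exact and_congr_left fun _ => (e.symm.surjective.injective_comp_right.eq_iff' rfl).symm.not
  simp only [IsSpectralRadius, hiff]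

end Spectral

section Aalpha

variable {V W : Type*} [Fintype V] [Fintype W] {G : SimpleGraph V} {α lam lam' μ : ℝ}
  {x : V → ℝ}

lemma Aalpha_isSymm (G : SimpleGraph V) (α : ℝ) : (Aalpha G α).IsSymm := by
  refine (Matrix.isSymm_diagonal _).smul α |>.add (Matrix.IsSymm.smul ?_ (1 - α))
  exact Matrix.IsSymm.ext fun i j => by simp only [Matrix.of_apply, G.adj_comm]

lemma Aalpha_apply_of_ne (G : SimpleGraph V) (α : ℝ) {v w : V} (hvw : v ≠ w) :
    Aalpha G α v w = if G.Adj v w then 1 - α else 0 := by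
  simp [Aalpha, hvw]

lemma Aalpha_mulVec_apply (G : SimpleGraph V) (α : ℝ) (x : V → ℝ) (v : V) :
    (Aalpha G α *ᵥ x) v = ∑ w ∈ G.neighborFinset v, (α * x v + (1 - α) * x w) := by
  rw [Aalpha, Matrix.add_mulVec, Matrix.smul_mulVec, Matrix.smul_mulVec, Finset.sum_add_distrib,
    Finset.sum_const, G.card_neighborFinset_eq_degree, ← Finset.mul_sum,
    G.neighborFinset_eq_filter, Finset.sum_filter, nsmul_eq_mul, mul_left_comm]
  simp only [Pi.add_apply, Pi.smul_apply, Matrix.mulVec_diagonal, smul_eq_mul]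
  simp [Matrix.mulVec, dotProduct]

lemma Aalpha_mulVec_one (G : SimpleGraph V) (α : ℝ) (v : V) :
    (Aalpha G α *ᵥ 1) v = G.degree v := by
  simp [Aalpha_mulVec_apply]

lemma Aalpha_submatrix_iso {H : SimpleGraph W} (φ : G ≃g H) (α : ℝ) :
    (Aalpha H α).submatrix φ.toEquiv φ.toEquiv = Aalpha G α := by
  ext v w
  simp [Aalpha, Matrix.diagonal_apply, φ.map_adj_iff, φ.degree_eq]

lemma isSpectralRadius_Aalpha_iff_of_iso {H : SimpleGraph W} (φ : G ≃g H) :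
    IsSpectralRadius (Aalpha G α) lam ↔ IsSpectralRadius (Aalpha H α) lam := by
  rw [← Aalpha_submatrix_iso φ, isSpectralRadius_submatrix]

lemma IsSpectralRadius.exists_pos_eigenvector (hG : G.Connected) (hα : α < 1)
    (h : IsSpectralRadius (Aalpha G α) lam) :
    ∃ x : V → ℝ, (∀ v, 0 < x v) ∧ Aalpha G α *ᵥ x = lam • x := by
  have hpos : ∀ v w, G.Adj v w → 0 < Aalpha G α v w := fun v w hvw => by
    rw [Aalpha_apply_of_ne G α hvw.ne, if_pos hvw]
    exact sub_pos.2 hα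
  have hnonneg : ∀ v w, v ≠ w → 0 ≤ Aalpha G α v w := fun v w hvw => by
    rw [Aalpha_apply_of_ne G α hvw]
    exact ite_nonneg (sub_nonneg.2 hα.le) le_rfl
  obtain ⟨x, hx, hx0, heig⟩ := h.exists_nonneg_eigenvector (Aalpha_isSymm G α) hnonneg
  exact ⟨x, pos_of_mulVec_eq_smul hG hnonneg hpos hx hx0 heig, heig⟩

lemma IsSpectralRadius.lt_of_mulVec_lt_smul (hG : G.Connected) (hα : α < 1)
    (h : IsSpectralRadius (Aalpha G α) lam) (hx : 0 ≤ x) (hlt : Aalpha G α *ᵥ x < μ • x) :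
    lam < μ := by
  obtain ⟨y, hy, heig⟩ := h.exists_pos_eigenvector hG hα
  exact _root_.lt_of_mulVec_lt_smul (Aalpha_isSymm G α) hy heig hx hlt

theorem IsSpectralRadius.lt_of_lt {G' : SimpleGraph V} (hlt : G' < G) (hG' : G'.Connected)
    (hα : α ∈ Set.Ico 0 1) (h : IsSpectralRadius (Aalpha G α) lam)
    (h' : IsSpectralRadius (Aalpha G' α) lam') : lam' < lam := by
  obtain ⟨x, hx, heig⟩ := h.exists_pos_eigenvector (hG'.mono hlt.le) hα.2
  have hterm (v w : V) : 0 < α * x v + (1 - α) * x w :=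
    add_pos_of_nonneg_of_pos (mul_nonneg hα.1 (hx v).le) (mul_pos (sub_pos.2 hα.2) (hx w))
  refine h'.lt_of_mulVec_lt_smul hG' hα.2 (fun v => (hx v).le) ?_
  rw [← heig, Pi.lt_def]
  have hsub (u : V) : G'.neighborFinset u ⊆ G.neighborFinset u := fun w hw =>
    (G.mem_neighborFinset u w).2 (hlt.le ((G'.mem_neighborFinset u w).1 hw))
  obtain ⟨v, w, hG, hG'⟩ : ∃ v w, G.Adj v w ∧ ¬ G'.Adj v w := by
    simpa [SimpleGraph.le_iff_adj] using hlt.not_ge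
  refine ⟨fun u => ?_, v, ?_⟩ <;> simp only [Aalpha_mulVec_apply]
  · exact Finset.sum_le_sum_of_subset_of_nonneg (hsub u) fun w _ _ => (hterm u w).le
  · exact Finset.sum_lt_sum_of_subset (hsub v) ((G.mem_neighborFinset v w).2 hG)
      (mt (G'.mem_neighborFinset v w).1 hG') (hterm v w) fun u _ _ => (hterm v u).le

lemma two_mul_card_le_sum_degrees (hG : G.Connected) (hcyc : ¬ G.IsAcyclic) :
    2 * Fintype.card V ≤ ∑ v, G.degree v := by
  have hlt := hG.card_vert_le_card_edgeSet_add_one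
  have hne : Nat.card G.edgeSet + 1 ≠ Nat.card V := fun h =>
    hcyc (SimpleGraph.isTree_iff_connected_and_card.2 ⟨hG, h⟩).isAcyclic
  rw [Nat.card_eq_fintype_card, Nat.card_eq_fintype_card, ← SimpleGraph.edgeFinset_card] at hlt hne
  rw [G.sum_degrees_eq_twice_card_edges]
  omega

theorem IsSpectralRadius.two_lt (hG : G.Connected) (hcyc : ¬ G.IsAcyclic) {c : V}
    (hc : G.degree c ≠ 2) (h : IsSpectralRadius (Aalpha G α) lam) : 2 < lam := by
  by_contra! hlam
  have hsum : 2 * (Fintype.card V : ℝ) ≤ ∑ v, (G.degree v : ℝ) := by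
    exact_mod_cast two_mul_card_le_sum_degrees hG hcyc
  have heig : Aalpha G α *ᵥ 1 = lam • 1 := h.mulVec_eq_smul (Aalpha_isSymm G α) <| by
    simp only [one_dotProduct, Aalpha_mulVec_one, Pi.one_apply, Finset.sum_const,
      Finset.card_univ, nsmul_one]
    exact (mul_le_mul_of_nonneg_right hlam (Nat.cast_nonneg _)).trans hsum
  have hdeg (v : V) : (G.degree v : ℝ) = lam := by
    simpa [Aalpha_mulVec_one] using congrFun heig v
  have hcard : (0 : ℝ) < Fintype.card V := by exact_mod_cast Fintype.card_pos_iff.2 ⟨c⟩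
  simp only [hdeg, Finset.sum_const, Finset.card_univ, nsmul_eq_mul] at hsum
  refine hc (Nat.cast_injective (R := ℝ) ?_)
  rw [hdeg]
  push_cast
  nlinarith

theorem IsSpectralRadius.sq_mul_degree_le (hG : G.Connected) (hα : α ∈ Set.Ico 0 1)
    (h : IsSpectralRadius (Aalpha G α) lam) (c : V) :
    (1 - α) ^ 2 * G.degree c ≤ (lam - α * G.degree c) * (lam - α) := by
  obtain ⟨x, hx, heig⟩ := h.exists_pos_eigenvector hG hα.2
  have hrow (v : V) : ∑ w ∈ G.neighborFinset v, (α * x v + (1 - α) * x w) = lam * x v := by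
    rw [← Aalpha_mulVec_apply, heig, Pi.smul_apply, smul_eq_mul]
  have hcenter : (lam - α * G.degree c) * x c = (1 - α) * ∑ w ∈ G.neighborFinset c, x w := by
    have := hrow c
    rw [Finset.sum_add_distrib, Finset.sum_const, G.card_neighborFinset_eq_degree, nsmul_eq_mul,
      ← Finset.mul_sum] at this
    linarith
  have hneighbor : ∀ w ∈ G.neighborFinset c, (1 - α) * x c ≤ (lam - α) * x w := fun w hw => by
    have := Finset.single_le_sum (f := fun u => α * x w + (1 - α) * x u)
      (fun u _ => add_nonneg (mul_nonneg hα.1 (hx w).le)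
        (mul_nonneg (sub_nonneg.2 hα.2.le) (hx u).le))
      ((G.mem_neighborFinset w c).2 ((G.mem_neighborFinset c w).1 hw).symm)
    rw [hrow w] at this
    linarith
  refine le_of_mul_le_mul_right ?_ (hx c)
  calc (1 - α) ^ 2 * G.degree c * x c
      = (1 - α) * ∑ w ∈ G.neighborFinset c, (1 - α) * x c := by
        rw [Finset.sum_const, G.card_neighborFinset_eq_degree, nsmul_eq_mul]; ring
    _ ≤ (1 - α) * ∑ w ∈ G.neighborFinset c, (lam - α) * x w :=
        mul_le_mul_of_nonneg_left (Finset.sum_le_sum hneighbor) (sub_nonneg.2 hα.2.le)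
    _ = (lam - α * G.degree c) * (lam - α) * x c := by
        rw [← Finset.mul_sum, mul_left_comm, ← hcenter]; ring

end Aalpha

lemma indepNum_eq_simpleGraph_indepNum {V : Type*} [Fintype V] (G : SimpleGraph V) :
    indepNum G = G.indepNum := by
  have hiff (s : Finset V) : (∀ a ∈ s, ∀ b ∈ s, ¬ G.Adj a b) ↔ G.IsIndepSet s :=
    ⟨fun h a ha b hb _ => h a ha b hb, fun h a ha b hb hab => h ha hb hab.ne hab⟩
  simp only [indepNum, SimpleGraph.indepNum, SimpleGraph.isNIndepSet_iff, hiff, and_comm]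

/-- `C` is a vertex cover of `G`, and `f` matches it injectively along edges of `G` into the
complement of `C`. Such a pair certifies that `C` is a minimum vertex cover. -/
structure IsMatchedCover {V : Type*} (G : SimpleGraph V) (C : Finset V) (f : V → V) : Prop where
  isVertexCover : G.IsVertexCover C
  adj : ∀ c ∈ C, G.Adj c (f c)
  notMem : ∀ c ∈ C, f c ∉ C
  injOn : Set.InjOn f C

lemma exists_injOn_or_card_lt {α β : Type*} [Fintype β] [Nonempty β] (C : Finset α)
    (r : α → β → Prop) :
    (∃ f : α → β, Set.InjOn f C ∧ ∀ c ∈ C, r c (f c)) ∨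
      ∃ X ⊆ C, #{v | ∃ x ∈ X, r x v} < #X := by
  by_cases hall : ∀ A : Finset C, #A ≤ #{v | ∃ a ∈ A, r a v}
  · obtain ⟨g, hg, hgr⟩ :=
      (Fintype.all_card_le_filter_rel_iff_exists_injective fun (c : C) v => r c v).1 hall
    have hval (c : C) :
        Function.extend Subtype.val g (fun _ => Classical.arbitrary β) c = g c :=
      Subtype.val_injective.extend_apply g _ c
    refine .inl ⟨Function.extend Subtype.val g fun _ => Classical.arbitrary β, ?_, ?_⟩
    · intro c hc d hd hcd
      rw [hval ⟨c, hc⟩, hval ⟨d, hd⟩] at hcd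
      exact congrArg Subtype.val (hg hcd)
    · intro c hc
      rw [hval ⟨c, hc⟩]
      exact hgr ⟨c, hc⟩
  · push Not at hall
    obtain ⟨A, hA⟩ := hall
    refine .inr ⟨A.map (Function.Embedding.subtype _), Finset.map_subtype_subset A, ?_⟩
    simpa using hA

section Independence

variable {V : Type*} {G : SimpleGraph V} {C S X : Finset V} {f : V → V}

lemma IsMatchedCover.deleteEdges (h : IsMatchedCover G C f) {u w : V}
    (hM : ∀ c ∈ C, s(c, f c) ≠ s(u, w)) : IsMatchedCover (G.deleteEdges {s(u, w)}) C f where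
  isVertexCover := h.isVertexCover.mono (G.deleteEdges_le _)
  adj c hc := SimpleGraph.deleteEdges_adj.2 ⟨h.adj c hc, hM c hc⟩
  notMem := h.notMem
  injOn := h.injOn

-- The two edges of a cycle at its base vertex share an endpoint, so at most one is in the matching.
theorem IsMatchedCover.exists_not_isBridge (h : IsMatchedCover G C f) (hcyc : ¬ G.IsAcyclic) :
    ∃ u w, G.Adj u w ∧ ¬ G.IsBridge s(u, w) ∧ ∀ c ∈ C, s(c, f c) ≠ s(u, w) := by
  obtain ⟨v, p, hp⟩ : ∃ v, ∃ p : G.Walk v v, p.IsCycle := by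
    simpa [SimpleGraph.IsAcyclic] using hcyc
  have adj_snd := p.adj_snd hp.not_nil
  have adj_pen := (p.adj_penultimate hp.not_nil).symm
  have not_bridge {w : V} (hw : G.Adj v w) (hmem : s(v, w) ∈ p.edges) : ¬ G.IsBridge s(v, w) :=
    fun hb => SimpleGraph.isBridge_iff_forall_cycle_notMem hw |>.1 hb p hp hmem
  by_contra! hmatched
  obtain ⟨c, hc, hcv⟩ := hmatched _ _ adj_snd
    (not_bridge adj_snd (p.mk_start_snd_mem_edges hp.not_nil))
  obtain ⟨d, hd, hdv⟩ := hmatched _ _ adj_pen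
    (not_bridge adj_pen (Sym2.eq_swap ▸ p.mk_penultimate_end_mem_edges hp.not_nil))
  refine hp.snd_ne_penultimate ?_
  obtain ⟨rfl, hfc⟩ | ⟨hcs, rfl⟩ := Sym2.eq_iff.1 hcv <;>
    obtain ⟨hdc, hfd⟩ | ⟨hdp, hfd⟩ := Sym2.eq_iff.1 hdv
  · rw [← hfc, ← hfd, hdc]
  · exact absurd (hfd ▸ hc) (h.notMem d hd)
  · exact absurd (hdc ▸ hd) (h.notMem c hc)
  · rw [← hcs, ← hdp, h.injOn hc hd hfd.symm]

theorem IsMatchedCover.exists_connected_lt (h : IsMatchedCover G C f) (hG : G.Connected)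
    (hcyc : ¬ G.IsAcyclic) : ∃ G' < G, G'.Connected ∧ IsMatchedCover G' C f := by
  obtain ⟨u, w, huw, hbridge, hM⟩ := h.exists_not_isBridge hcyc
  refine ⟨G.deleteEdges {s(u, w)}, lt_of_le_not_ge (G.deleteEdges_le _) fun hle => ?_,
    hG.connected_delete_edge_of_not_isBridge hbridge, h.deleteEdges hM⟩
  simpa using hle huw

lemma exists_adj_dist_lt (hG : G.Connected) {v r : V} (hvr : v ≠ r) :
    ∃ w, G.Adj v w ∧ G.dist w r < G.dist v r := by
  obtain ⟨p, hp⟩ := hG.exists_walk_length_eq_dist v r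
  cases p with
  | nil => exact absurd rfl hvr
  | cons hadj q => exact ⟨_, hadj, (SimpleGraph.dist_le q).trans_lt (by simp [← hp])⟩

lemma indepNum_le_of_embedding {W : Type*} [Finite W] {H : SimpleGraph W} (φ : G ↪g H) :
    G.indepNum ≤ H.indepNum := by
  obtain ⟨s, hs⟩ := G.exists_isNIndepSet_indepNum
  rw [← hs.card_eq, ← s.card_map φ.toEmbedding]
  refine SimpleGraph.IsIndepSet.card_le_indepNum ?_
  rw [Finset.coe_map]
  rintro _ ⟨v, hv, rfl⟩ _ ⟨w, hw, rfl⟩ hvw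
  exact fun hadj => hs.isIndepSet hv hw (ne_of_apply_ne _ hvw) (φ.map_adj_iff.1 hadj)

lemma card_le_card_filter_adj [Finite V] (hS : G.IsMaximumIndepSet S) (hX : G.IsIndepSet X)
    (hdisj : Disjoint X S) : #X ≤ #{s ∈ S | ∃ x ∈ X, G.Adj x s} := by
  have hindep : G.IsIndepSet ↑(X ∪ {s ∈ S | ¬ ∃ x ∈ X, G.Adj x s}) := by
    intro u hu v hv _ huv
    have hindS : u ∈ S → v ∉ S := fun hu hv => hS.isIndepSet hu hv huv.ne huv
    have hindX : u ∈ X → v ∉ X := fun hu hv => hX hu hv huv.ne huv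
    have := huv.symm
    simp only [Finset.coe_union, Finset.coe_filter, Set.mem_union, Finset.mem_coe,
      Set.mem_ofPred_eq] at hu hv
    grind
  have hle := hS.maximum _ hindep
  rw [Finset.card_union_of_disjoint (hdisj.mono_right (Finset.filter_subset _ _))] at hle
  have := Finset.card_filter_add_card_filter_not (s := S) (fun s => ∃ x ∈ X, G.Adj x s)
  omega

variable [Fintype V]

theorem IsMatchedCover.indepNum_eq (h : IsMatchedCover G C f) :
    G.indepNum = Fintype.card V - #C := by
  rw [← Finset.card_compl]
  refine le_antisymm ?_ (SimpleGraph.IsIndepSet.card_le_indepNum ?_)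
  · obtain ⟨s, hs⟩ := G.exists_isNIndepSet_indepNum
    rw [← hs.card_eq]
    -- Each vertex of `s` in the cover is replaced by its partner, which is not in `s`.
    refine Finset.card_le_card_of_injOn (fun v => if v ∈ C then f v else v) ?_ ?_
    · intro v _
      by_cases hv : v ∈ C
      · simpa [hv] using h.notMem v hv
      · simp [hv]
    · have partner_notMem {c : V} (hc : c ∈ s) (hcC : c ∈ C) : f c ∉ s := fun hfc =>
        hs.isIndepSet hc hfc (h.adj c hcC).ne (h.adj c hcC)
      intro v hv w hw hvw
      by_cases hvC : v ∈ C <;> by_cases hwC : w ∈ C <;>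
        simp only [hvC, hwC, if_true, if_false] at hvw
      · exact h.injOn hvC hwC hvw
      · exact absurd (hvw ▸ hw) (partner_notMem hv hvC)
      · exact absurd (hvw ▸ hv) (partner_notMem hw hwC)
      · exact hvw
  · simpa using SimpleGraph.isIndepSet_compl_iff_isVertexCover.2 h.isVertexCover

-- Each vertex outside `W` owns the first edge of a shortest path to a fixed vertex of `W`.
theorem card_compl_le_sum_degree (hG : G.Connected) {W Y : Finset V} (hW : W.Nonempty)
    (hY : ∀ v w, G.Adj v w → v ∉ W → v ∈ Y ∨ w ∈ Y) : #Wᶜ ≤ ∑ y ∈ Y, G.degree y := by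
  obtain ⟨r, hr⟩ := hW
  have hne : ∀ v ∈ Wᶜ, v ≠ r := fun v hv h => Finset.mem_compl.1 hv (h ▸ hr)
  choose! parent hadj hdist using fun v (hv : v ∈ Wᶜ) => exists_adj_dist_lt hG (hne v hv)
  calc #Wᶜ ≤ #(Y.biUnion fun y => G.incidenceFinset y) := by
        refine Finset.card_le_card_of_injOn (fun v => s(v, parent v)) ?_ ?_
        · intro v hv
          simp only [Finset.coe_biUnion, Set.mem_iUnion, Finset.mem_coe,
            SimpleGraph.mem_incidenceFinset]
          obtain h | h := hY v _ (hadj v hv) (Finset.mem_compl.1 hv)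
          · exact ⟨v, h, hadj v hv, Sym2.mem_mk_left _ _⟩
          · exact ⟨_, h, hadj v hv, Sym2.mem_mk_right _ _⟩
        · intro v hv w hw hvw
          obtain ⟨h, -⟩ | ⟨hv', hw'⟩ := Sym2.eq_iff.1 hvw
          · exact h
          · exact absurd ((hw' ▸ hdist v hv).trans (hv' ▸ hdist w hw)) (lt_irrefl _)
    _ ≤ ∑ y ∈ Y, #(G.incidenceFinset y) := Finset.card_biUnion_le
    _ = ∑ y ∈ Y, G.degree y := by simp only [G.card_incidenceFinset_eq_degree]

lemma card_lt_of_hall_violator (hG : G.Connected) (hS : G.IsIndepSet S)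
    (hlt : #{s ∈ S | ∃ x ∈ X, G.Adj x s} < #X) :
    Fintype.card V < G.maxDegree * #(Sᶜ \ X) + 2 * #X := by
  set N := {s ∈ S | ∃ x ∈ X, G.Adj x s} with hN
  have hXN : (X ∪ N).Nonempty := (Finset.card_pos.1 (Nat.zero_lt_of_lt hlt)).inl
  have hcover : ∀ v w, G.Adj v w → v ∉ X ∪ N → v ∈ Sᶜ \ X ∨ w ∈ Sᶜ \ X := by
    intro v w hvw hv
    have hS' : ¬ (v ∈ S ∧ w ∈ S) := fun h => hS h.1 h.2 hvw.ne hvw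
    have := hvw.symm
    simp only [hN, Finset.mem_union, Finset.mem_filter, Finset.mem_sdiff, Finset.mem_compl] at hv ⊢
    grind
  have hsum : ∑ y ∈ Sᶜ \ X, G.degree y ≤ G.maxDegree * #(Sᶜ \ X) := by
    rw [mul_comm, ← smul_eq_mul]
    exact Finset.sum_le_card_nsmul _ _ _ fun y _ => G.degree_le_maxDegree y
  have hcompl := (card_compl_le_sum_degree hG hXN hcover).trans hsum
  have hunion := Finset.card_union_le X N
  rw [Finset.card_compl] at hcompl
  omega

theorem exists_isMatchedCover_or_card_lt (hG : G.Connected) (hS : G.IsMaximumIndepSet S) :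
    (∃ f, IsMatchedCover G Sᶜ f) ∨
      ∃ X ⊆ Sᶜ, 2 ≤ #X ∧ Fintype.card V < G.maxDegree * #(Sᶜ \ X) + 2 * #X := by
  have := hG.nonempty
  obtain ⟨f, hinj, hf⟩ | ⟨X, hXS, hX⟩ := exists_injOn_or_card_lt Sᶜ fun c s => s ∈ S ∧ G.Adj c s
  · refine .inl ⟨f, ?_, fun c hc => (hf c hc).2, fun c hc => by simpa using (hf c hc).1, hinj⟩
    simpa [SimpleGraph.isVertexCover_compl] using hS.isIndepSet
  · have hX' : #{s ∈ S | ∃ x ∈ X, G.Adj x s} < #X := by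
      convert hX using 2
      ext s
      simp [and_left_comm]
    refine .inr ⟨X, hXS, ?_, card_lt_of_hall_violator hG hS.isIndepSet hX'⟩
    by_contra! hcard
    have hindep : G.IsIndepSet X := (Finset.card_le_one_iff_subsingleton.1 (by omega)).pairwise _
    have hdisj : Disjoint X S := Finset.subset_compl_iff_disjoint_right.1 hXS
    exact (card_le_card_filter_adj hS hindep hdisj).not_gt hX'

end Independence

/-- The graph obtained from `G` by attaching, for every `ℓ : L`, a pendant vertex at `p ℓ`. -/
def attachLeaves {W L : Type*} (G : SimpleGraph W) (p : L → W) : SimpleGraph (W ⊕ L) where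
  Adj
    | .inl v, .inl w => G.Adj v w
    | .inl v, .inr ℓ => p ℓ = v
    | .inr ℓ, .inl v => p ℓ = v
    | .inr _, .inr _ => False
  symm := ⟨by rintro (_ | _) (_ | _) h <;> first | exact h | exact G.adj_symm h⟩
  loopless := ⟨by rintro (_ | _) h <;> first | exact h | exact G.irrefl h⟩

section AttachLeaves

variable {W L : Type*} {G : SimpleGraph W}

@[simp]
lemma attachLeaves_adj_inl_inl (p : L → W) {v w : W} :
    (attachLeaves G p).Adj (.inl v) (.inl w) ↔ G.Adj v w := Iff.rfl

@[simp]
lemma attachLeaves_adj_inl_inr (p : L → W) {v : W} {ℓ : L} :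
    (attachLeaves G p).Adj (.inl v) (.inr ℓ) ↔ p ℓ = v := Iff.rfl

@[simp]
lemma attachLeaves_adj_inr_inl (p : L → W) {v : W} {ℓ : L} :
    (attachLeaves G p).Adj (.inr ℓ) (.inl v) ↔ p ℓ = v := Iff.rfl

@[simp]
lemma not_attachLeaves_adj_inr_inr (p : L → W) {ℓ m : L} :
    ¬ (attachLeaves G p).Adj (.inr ℓ) (.inr m) := id

lemma attachLeaves_connected (hG : G.Connected) (p : L → W) : (attachLeaves G p).Connected := by
  obtain ⟨r⟩ := hG.nonempty
  let inlHom : G →g attachLeaves G p := ⟨Sum.inl, id⟩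
  have reach_inl (v : W) : (attachLeaves G p).Reachable (.inl r) (.inl v) := (hG r v).map inlHom
  refine SimpleGraph.connected_iff_exists_forall_reachable _ |>.2 ⟨.inl r, ?_⟩
  rintro (v | ℓ)
  · exact reach_inl v
  · exact (reach_inl (p ℓ)).trans (SimpleGraph.Adj.reachable rfl)

lemma isVertexCover_attachLeaves {p : L → W} {C : Set W} (hC : G.IsVertexCover C)
    (hp : ∀ ℓ, p ℓ ∈ C) : (attachLeaves G p).IsVertexCover (Sum.inl '' C) := by
  rintro (v | ℓ) (w | m) h
  · simpa using hC h
  · exact .inl ⟨v, h ▸ hp m, rfl⟩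
  · exact .inr ⟨w, h ▸ hp ℓ, rfl⟩
  · exact h.elim

variable [Fintype W] [Fintype L]

lemma Aalpha_attachLeaves_mulVec_inl (p : L → W) (α : ℝ) (x : W → ℝ) (y : L → ℝ) (v : W) :
    (Aalpha (attachLeaves G p) α *ᵥ Sum.elim x y) (.inl v) =
      (Aalpha G α *ᵥ x) v + ∑ ℓ with p ℓ = v, (α * x v + (1 - α) * y ℓ) := by
  simp [Aalpha_mulVec_apply, SimpleGraph.neighborFinset_eq_filter, Finset.sum_filter]

lemma Aalpha_attachLeaves_mulVec_inr (p : L → W) (α : ℝ) (x : W → ℝ) (y : L → ℝ) (ℓ : L) :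
    (Aalpha (attachLeaves G p) α *ᵥ Sum.elim x y) (.inr ℓ) = α * y ℓ + (1 - α) * x (p ℓ) := by
  simp [Aalpha_mulVec_apply, SimpleGraph.neighborFinset_eq_filter, Finset.sum_filter]

end AttachLeaves

/-- The double broom: the path on seven vertices with `a` leaves attached at its first vertex and
`b` leaves attached at its last vertex. -/
def doubleBroom (a b : ℕ) : SimpleGraph (Fin 7 ⊕ (Fin a ⊕ Fin b)) :=
  attachLeaves (SimpleGraph.pathGraph 7) (Sum.elim (fun _ => 0) fun _ => 6)

section DoubleBroom

variable {a b : ℕ} {α d lam μ : ℝ}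

lemma doubleBroom_connected (a b : ℕ) : (doubleBroom a b).Connected :=
  attachLeaves_connected (SimpleGraph.pathGraph_connected 6) _

lemma isMatchedCover_doubleBroom (a b : ℕ) :
    IsMatchedCover (doubleBroom a (b + 1)) (({0, 2, 4, 6} : Finset (Fin 7)).map .inl)
      (Sum.elim (fun i => if i = 6 then .inr (.inr 0) else .inl (i + 1)) .inr) where
  isVertexCover := by
    rw [Finset.coe_map]
    refine isVertexCover_attachLeaves (fun i j hij => ?_) ?_
    · revert i j
      simp only [SimpleGraph.pathGraph_adj, Finset.mem_coe]
      decide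
    · rintro (_ | _) <;> simp
  adj := by simp [doubleBroom, SimpleGraph.pathGraph_adj]
  notMem := by simp
  injOn := by simp [Set.InjOn]

lemma doubleBroom_indepNum (a b : ℕ) : (doubleBroom a (b + 1)).indepNum = a + b + 4 := by
  rw [(isMatchedCover_doubleBroom a b).indepNum_eq]
  simp only [Fintype.card_sum, Fintype.card_fin, Finset.card_map]
  rw [show #({0, 2, 4, 6} : Finset (Fin 7)) = 4 by decide]
  omega

lemma Aalpha_pathGraph_mulVec (α P Q : ℝ) :
    Aalpha (SimpleGraph.pathGraph 7) α *ᵥ ![P, Q, P, Q, P, Q, P] =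
      ![α * P + (1 - α) * Q, 2 * (α * Q + (1 - α) * P), 2 * (α * P + (1 - α) * Q),
        2 * (α * Q + (1 - α) * P), 2 * (α * P + (1 - α) * Q), 2 * (α * Q + (1 - α) * P),
        α * P + (1 - α) * Q] := by
  ext i
  fin_cases i <;>
    simp [Aalpha_mulVec_apply, SimpleGraph.neighborFinset_eq_filter, Finset.sum_filter,
      SimpleGraph.pathGraph_adj, Fin.sum_univ_seven] <;> ring

lemma Aalpha_doubleBroom_mulVec (a b : ℕ) (α P Q T : ℝ) :
    Aalpha (doubleBroom a b) α *ᵥ Sum.elim ![P, Q, P, Q, P, Q, P] (fun _ => T) =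
      Sum.elim ![α * P + (1 - α) * Q + a * (α * P + (1 - α) * T), 2 * (α * Q + (1 - α) * P),
        2 * (α * P + (1 - α) * Q), 2 * (α * Q + (1 - α) * P), 2 * (α * P + (1 - α) * Q),
        2 * (α * Q + (1 - α) * P), α * P + (1 - α) * Q + b * (α * P + (1 - α) * T)]
        (fun _ => α * T + (1 - α) * P) := by
  ext (i | ℓ | ℓ)
  · rw [doubleBroom, Aalpha_attachLeaves_mulVec_inl, Aalpha_pathGraph_mulVec, Finset.sum_filter,
      Fintype.sum_sum_type]
    fin_cases i <;> simp <;> ring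
  all_goals simp [doubleBroom, Aalpha_attachLeaves_mulVec_inr]

lemma hub_row_le {c : ℝ} (hα : α ∈ Set.Ico 0 1) (hμ : 2 < μ) (hc : c + 2 ≤ d)
    (hd : (1 - α) ^ 2 * d ≤ (μ - α * d) * (μ - α)) :
    α * ((μ - 2 * α) * (μ - α)) + (1 - α) * (2 * (1 - α) * (μ - α)) +
        c * (α * ((μ - 2 * α) * (μ - α)) + (1 - α) * ((1 - α) * (μ - 2 * α))) ≤
      μ * ((μ - 2 * α) * (μ - α)) := by
  obtain ⟨h0, h1⟩ := hα
  have hp : 0 < μ - 2 * α := by linarith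
  have hm : 0 < μ - α := by linarith
  have hcoef : 0 ≤ α * ((μ - 2 * α) * (μ - α)) + (1 - α) * ((1 - α) * (μ - 2 * α)) := by
    have : 0 ≤ 1 - α := by linarith
    positivity
  have hpm : 2 * (1 - α) ^ 2 ≤ (μ - 2 * α) * (μ - α) := by nlinarith
  have hstar := mul_le_mul_of_nonneg_left hd hp.le
  have hrest := mul_le_mul_of_nonneg_left hpm h0
  have hmono := mul_le_mul_of_nonneg_right hc hcoef
  linarith

theorem lt_of_isSpectralRadius_doubleBroom (hα : α ∈ Set.Ico 0 1) (hμ : 2 < μ) (ha : a + 2 ≤ d)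
    (hb : b + 2 ≤ d) (hd : (1 - α) ^ 2 * d ≤ (μ - α * d) * (μ - α))
    (h : IsSpectralRadius (Aalpha (doubleBroom a b) α) lam) : lam < μ := by
  -- The test vector is `P` at the even path vertices; the eigenvalue equations for `μ` at the odd
  -- path vertices and at the leaves then give `Q` and `T`, up to clearing denominators.
  set P := (μ - 2 * α) * (μ - α) with hP
  set Q := 2 * (1 - α) * (μ - α) with hQ
  set T := (1 - α) * (μ - 2 * α) with hT
  have h1 : α < 1 := hα.2
  have hP0 : 0 < P := mul_pos (by linarith) (by linarith)
  have hQ0 : 0 < Q := mul_pos (by linarith) (by linarith)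
  have hT0 : 0 < T := mul_pos (by linarith) (by linarith)
  have leaf : α * T + (1 - α) * P = μ * T := by rw [hT, hP]; ring
  have odd : 2 * (α * Q + (1 - α) * P) = μ * Q := by rw [hQ, hP]; ring
  have even : 2 * (α * P + (1 - α) * Q) < μ * P := by
    have : (2 * (1 - α)) ^ 2 < (μ - 2 * α) ^ 2 := by gcongr; linarith
    have := mul_lt_mul_of_pos_right this (show 0 < μ - α by linarith)
    rw [hQ, hP]
    linarith
  have hub {c : ℝ} (hc : c + 2 ≤ d) : α * P + (1 - α) * Q + c * (α * P + (1 - α) * T) ≤ μ * P :=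
    hub_row_le hα hμ hc hd
  refine h.lt_of_mulVec_lt_smul (doubleBroom_connected a b) h1
    (x := Sum.elim ![P, Q, P, Q, P, Q, P] fun _ => T) ?_ ?_
  · rintro (i | _)
    · fin_cases i <;> simp [hP0.le, hQ0.le]
    · exact hT0.le
  · rw [Aalpha_doubleBroom_mulVec, leaf, odd, Pi.lt_def]
    refine ⟨?_, .inl 2, by simpa⟩
    rintro (i | _)
    · fin_cases i <;> simp [even.le, hub ha, hub hb]
    · exact le_rfl

end DoubleBroom

section Main

variable {V : Type*} [Fintype V] {G : SimpleGraph V}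

theorem exists_smaller_of_maxDegree (hG : G.Connected) (hcyc : ¬ G.IsAcyclic)
    (hV : 8 ≤ Fintype.card V) (hdeg : Fintype.card V ≤ 2 * G.maxDegree + 3) :
    ∃ G' : SimpleGraph V, G'.Connected ∧ G'.indepNum = Fintype.card V - 4 ∧
      ∀ α ∈ Set.Ico (0 : ℝ) 1, ∀ lam lam' : ℝ,
        IsSpectralRadius (Aalpha G α) lam → IsSpectralRadius (Aalpha G' α) lam' → lam' < lam := by
  have := hG.nonempty
  obtain ⟨c, hc⟩ := G.exists_maximal_degree_vertex
  rw [hc] at hdeg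
  obtain ⟨a, b, hab, ha, hb⟩ : ∃ a b, Fintype.card V = 7 + (a + (b + 1)) ∧
      a + 2 ≤ G.degree c ∧ b + 1 + 2 ≤ G.degree c :=
    ⟨(Fintype.card V - 7) / 2, Fintype.card V - 8 - (Fintype.card V - 7) / 2, by omega, by omega,
      by omega⟩
  let e : V ≃ Fin 7 ⊕ (Fin a ⊕ Fin (b + 1)) := Fintype.equivOfCardEq (by simp [hab])
  let φ : (doubleBroom a (b + 1)).comap e ≃g doubleBroom a (b + 1) := SimpleGraph.Iso.comap e _
  refine ⟨_, φ.connected_iff.2 (doubleBroom_connected a (b + 1)), ?_, ?_⟩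
  · have hindep := doubleBroom_indepNum a b
    have hle := indepNum_le_of_embedding φ.toEmbedding
    have hge := indepNum_le_of_embedding φ.symm.toEmbedding
    omega
  · intro α hα lam lam' h h'
    rw [isSpectralRadius_Aalpha_iff_of_iso φ] at h'
    exact lt_of_isSpectralRadius_doubleBroom hα (h.two_lt hG hcyc (c := c) (by omega))
      (by exact_mod_cast ha) (by exact_mod_cast hb) (h.sq_mul_degree_le hG hα c) h'

theorem stmt16_general (hV : 8 ≤ Fintype.card V) (hG : G.Connected)
    (hind : indepNum G = Fintype.card V - 4) (hcyc : ¬ G.IsAcyclic) :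
    ∃ G' : SimpleGraph V, G'.Connected ∧ indepNum G' = Fintype.card V - 4 ∧
      ∀ α ∈ Set.Ico (0 : ℝ) 1, ∀ lam lam' : ℝ,
        IsSpectralRadius (Aalpha G α) lam → IsSpectralRadius (Aalpha G' α) lam' → lam' < lam := by
  simp only [indepNum_eq_simpleGraph_indepNum] at hind ⊢
  obtain ⟨S, hS⟩ := G.maximumIndepSet_exists
  have hcard : #Sᶜ = 4 := by
    have hcard_S := G.maximumIndepSet_card_eq_indepNum S hS
    rw [Finset.card_compl]
    omega
  obtain ⟨f, hf⟩ | ⟨X, hXS, hX, hlt⟩ := exists_isMatchedCover_or_card_lt hG hS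
  · obtain ⟨G', hlt, hG', hf'⟩ := hf.exists_connected_lt hG hcyc
    exact ⟨G', hG', hcard ▸ hf'.indepNum_eq,
      fun α hα lam lam' h h' => h.lt_of_lt hlt hG' hα h'⟩
  · refine exists_smaller_of_maxDegree hG hcyc hV ?_
    have hX4 := hcard ▸ Finset.card_le_card hXS
    rw [Finset.card_sdiff_of_subset hXS, hcard] at hlt
    obtain h | h | h : #X = 2 ∨ #X = 3 ∨ #X = 4 := by omega
    all_goals rw [h] at hlt; omega

end Main

theorem stmt16 {V : Type*} [Fintype V] (G : SimpleGraph V) (n : ℕ)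
    (hn : Fintype.card V = n) (hn11 : 11 ≤ n)
    (hG : G.Connected) (hind : indepNum G = n - 4)
    (hcyc : ¬ G.IsAcyclic) :
    ∃ G' : SimpleGraph V, G'.Connected ∧ indepNum G' = n - 4 ∧
      ∀ α ∈ Set.Ico (0 : ℝ) 1, ∀ lam lam' : ℝ,
        IsSpectralRadius (Aalpha G α) lam →
        IsSpectralRadius (Aalpha G' α) lam' → lam' < lam := by
  subst hn
  exact stmt16_general (by omega) hG hind hcyc
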